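/- Let p, q be polynomials over ℂ with deg q ≤ n, and suppose there exist constants C > 0 and R ≥ R₀ such that |q(z)f(z) − p(z)| ≤ C·|z|^{−(n+1)} for all z ∈ ℂ with |z| ≥ R. Then the error of Padé approximation admits the integral representation f(z) − p(z)/q(z) = (1/q(z)²) · ∫ q(t)²·h(t)/(t − z) dμ(t) for every z ∈ ℂ with |z| > R₀ and q(z) ≠ 0. -/

import Mathlib

open MeasureTheory Polynomial

open Asymptotics Bornology Filter Topology

/-!
Write `f` for the Cauchy transform of `h dμ`. For every polynomial `s`, the Cauchy transform of
`s h dμ` differs from `s f` by a polynomial, because `(s(t) - s(z)) / (t - z)` is a polynomial in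
`z`. Cauchy transforms of compactly supported measures vanish at infinity, and a polynomial
vanishing at infinity is zero; so if `s f - r → 0` for a polynomial `r`, then `s f - r` *is* the
Cauchy transform of `s h dμ`. Since `deg q ≤ n`, the Padé condition gives `q (q f - p) → 0`, so this
applies to `s = q²` and `r = q p`.
-/

section PolynomialGrowth

variable {𝕜 : Type*} [NormedField 𝕜]

lemma isBigO_eval_pow_cobounded {q : 𝕜[X]} {n : ℕ} (hq : q.degree ≤ n) :
    (fun z => q.eval z) =O[cobounded 𝕜] fun z => z ^ n := by
  simp only [eval_eq_sum_range' (Nat.lt_succ_of_le (natDegree_le_of_degree_le hq))]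
  refine IsBigO.fun_sum fun i hi => IsBigO.const_mul_left (IsBigO.of_bound' ?_) _
  filter_upwards [eventually_cobounded_le_norm 1] with z hz
  rw [norm_pow, norm_pow]
  exact pow_le_pow_right₀ hz (Nat.lt_succ_iff.mp (Finset.mem_range.mp hi))

lemma isBigO_inv_pow_cobounded_of_norm_le {E : Type*} [Norm E] {g : 𝕜 → E} {C R : ℝ} {n : ℕ}
    (hg : ∀ z, R ≤ ‖z‖ → ‖g z‖ ≤ C / ‖z‖ ^ n) : g =O[cobounded 𝕜] fun z => (z ^ n)⁻¹ := by
  refine .of_bound C ?_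
  filter_upwards [eventually_cobounded_le_norm R] with z hz
  simpa only [norm_inv, norm_pow, div_eq_mul_inv] using hg z hz

lemma tendsto_eval_mul_cobounded_zero {q : 𝕜[X]} {n : ℕ} (hq : q.degree ≤ n) {g : 𝕜 → 𝕜}
    (hg : g =O[cobounded 𝕜] fun z => (z ^ (n + 1))⁻¹) :
    Tendsto (fun z => q.eval z * g z) (cobounded 𝕜) (𝓝 0) := by
  have hpow : (fun z : 𝕜 => z ^ n * (z ^ (n + 1))⁻¹) =ᶠ[cobounded 𝕜] Inv.inv := by
    filter_upwards [eventually_ne_cobounded 0] with z hz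
    rw [pow_succ, mul_inv, mul_inv_cancel_left₀ (pow_ne_zero n hz)]
  exact (((isBigO_eval_pow_cobounded hq).mul hg).trans_eventuallyEq hpow).trans_tendsto
    tendsto_inv₀_cobounded

end PolynomialGrowth

lemma polynomial_eq_zero_of_tendsto_cobounded {𝕜 : Type*} [NontriviallyNormedField 𝕜] {P : 𝕜[X]}
    (hP : Tendsto (fun z => P.eval z) (cobounded 𝕜) (𝓝 0)) : P = 0 := by
  rcases lt_or_ge 0 P.degree with hpos | hconst
  · exact absurd hP.norm (not_tendsto_nhds_of_tendsto_atTop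
      (P.tendsto_norm_atTop hpos tendsto_norm_cobounded_atTop) _)
  · rw [eq_C_of_degree_le_zero hconst] at hP ⊢
    simp only [eval_C] at hP
    rw [tendsto_nhds_unique tendsto_const_nhds hP, C_0]

lemma integrable_continuousOn_mul {X R : Type*} [TopologicalSpace X] [T2Space X]
    [MeasurableSpace X] [OpensMeasurableSpace X] [NormedRing R] [SecondCountableTopologyEither X R]
    {μ : Measure X} {K : Set X} (hK : IsCompact K) (hμK : ∀ᵐ t ∂μ, t ∈ K) {g h : X → R}
    (hg : ContinuousOn g K) (hh : Integrable h μ) : Integrable (fun t => g t * h t) μ := by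
  rw [← Measure.restrict_eq_self_of_ae_mem hμK] at hh ⊢
  exact IntegrableOn.continuousOn_mul hg hh hK

section CauchyTransform

variable {𝕜 : Type*} [RCLike 𝕜] [MeasurableSpace 𝕜]

/-- The Cauchy transform `z ↦ ∫ h(t) / (t - z) dμ(t)` of the measure `h dμ`. Where
`t ↦ h(t) / (t - z)` is not integrable, which can only happen on the support of `μ` when `h dμ` is
finite, it takes the junk value `0`. -/
noncomputable def cauchyTransform (μ : Measure 𝕜) (h : 𝕜 → 𝕜) (z : 𝕜) : 𝕜 :=
  ∫ t, h t / (t - z) ∂μ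

lemma cauchyTransform_const_mul (μ : Measure 𝕜) (a : 𝕜) (h : 𝕜 → 𝕜) (z : 𝕜) :
    cauchyTransform μ (fun t => a * h t) z = a * cauchyTransform μ h z := by
  simp only [cauchyTransform, mul_div_assoc, integral_const_mul]

variable {μ : Measure 𝕜} {K : Set 𝕜} {h : 𝕜 → 𝕜}

lemma tendsto_cauchyTransform_cobounded (hK : IsBounded K) (hμK : ∀ᵐ t ∂μ, t ∈ K)
    (hh : Integrable h μ) : Tendsto (cauchyTransform μ h) (cobounded 𝕜) (𝓝 0) := by
  obtain ⟨r, hr⟩ := hK.exists_norm_le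
  have hbound : ∀ᶠ z in cobounded 𝕜, ‖cauchyTransform μ h z‖ ≤ (∫ t, ‖h t‖ ∂μ) / (‖z‖ - r) := by
    filter_upwards [tendsto_norm_cobounded_atTop.eventually_gt_atTop r] with z hz
    rw [← integral_div]
    refine norm_integral_le_of_norm_le (hh.norm.div_const _) ?_
    filter_upwards [hμK] with t ht
    have hdist : ‖z‖ - r ≤ ‖t - z‖ :=
      (sub_le_sub_left (hr t ht) _).trans (norm_sub_rev z t ▸ norm_sub_norm_le z t)
    rw [norm_div]
    exact div_le_div_of_nonneg_left (norm_nonneg _) (sub_pos.mpr hz) hdist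
  refine squeeze_zero_norm' hbound (tendsto_const_nhds.div_atTop ?_)
  exact tendsto_atTop_add_const_right _ (-r) tendsto_norm_cobounded_atTop

variable [OpensMeasurableSpace 𝕜]

lemma integrable_div_sub (hK : IsCompact K) (hμK : ∀ᵐ t ∂μ, t ∈ K) (hh : Integrable h μ) {z : 𝕜}
    (hz : z ∉ K) : Integrable (fun t => h t / (t - z)) μ := by
  have hcont : ContinuousOn (fun t => (t - z)⁻¹) K :=
    (continuousOn_id.sub continuousOn_const).inv₀ fun t ht =>
      sub_ne_zero.mpr (ne_of_mem_of_not_mem ht hz)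
  simpa only [div_eq_inv_mul] using integrable_continuousOn_mul hK hμK hcont hh

lemma cauchyTransform_add (hK : IsCompact K) (hμK : ∀ᵐ t ∂μ, t ∈ K) {g : 𝕜 → 𝕜}
    (hg : Integrable g μ) (hh : Integrable h μ) {z : 𝕜} (hz : z ∉ K) :
    cauchyTransform μ (fun t => g t + h t) z = cauchyTransform μ g z + cauchyTransform μ h z := by
  simp only [cauchyTransform, add_div]
  exact integral_add (integrable_div_sub hK hμK hg hz) (integrable_div_sub hK hμK hh hz)

lemma cauchyTransform_id_mul (hK : IsCompact K) (hμK : ∀ᵐ t ∂μ, t ∈ K) (hh : Integrable h μ)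
    {z : 𝕜} (hz : z ∉ K) :
    cauchyTransform μ (fun t => t * h t) z = ∫ t, h t ∂μ + z * cauchyTransform μ h z := by
  have hsplit : ∀ᵐ t ∂μ, t * h t / (t - z) = h t + z * (h t / (t - z)) := by
    filter_upwards [hμK] with t ht
    have hne : t - z ≠ 0 := sub_ne_zero.mpr (ne_of_mem_of_not_mem ht hz)
    field_simp
    ring
  rw [cauchyTransform, integral_congr_ae hsplit,
    integral_add hh ((integrable_div_sub hK hμK hh hz).const_mul z), integral_const_mul,
    cauchyTransform]

lemma exists_polynomial_cauchyTransform_eval_mul (hK : IsCompact K) (hμK : ∀ᵐ t ∂μ, t ∈ K)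
    (hh : Integrable h μ) (s : 𝕜[X]) :
    ∃ P : 𝕜[X], ∀ z ∉ K, cauchyTransform μ (fun t => s.eval t * h t) z =
      s.eval z * cauchyTransform μ h z + P.eval z := by
  have hint (s : 𝕜[X]) : Integrable (fun t => s.eval t * h t) μ :=
    integrable_continuousOn_mul hK hμK s.continuousOn hh
  induction s using Polynomial.induction_on with
  | C a =>
    refine ⟨0, fun z _ => ?_⟩
    simp only [eval_C, cauchyTransform_const_mul, eval_zero, add_zero]
  | add s₁ s₂ ih₁ ih₂ =>
    obtain ⟨P₁, hP₁⟩ := ih₁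
    obtain ⟨P₂, hP₂⟩ := ih₂
    refine ⟨P₁ + P₂, fun z hz => ?_⟩
    simp only [eval_add, add_mul]
    rw [cauchyTransform_add hK hμK (hint s₁) (hint s₂) hz, hP₁ z hz, hP₂ z hz]
    ring
  | monomial k a ih =>
    obtain ⟨P, hP⟩ := ih
    refine ⟨C (∫ t, (C a * X ^ k).eval t * h t ∂μ) + P * X, fun z hz => ?_⟩
    have heval (t : 𝕜) : (C a * X ^ (k + 1)).eval t = t * (C a * X ^ k).eval t := by
      simp only [eval_mul, eval_C, eval_pow, eval_X]
      ring
    simp only [heval, mul_assoc]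
    rw [cauchyTransform_id_mul hK hμK (hint _) hz, hP z hz, eval_add, eval_C, eval_mul_X]
    ring

lemma cauchyTransform_eval_mul_of_tendsto (hK : IsCompact K) (hμK : ∀ᵐ t ∂μ, t ∈ K)
    (hh : Integrable h μ) {s r : 𝕜[X]}
    (hsr : Tendsto (fun z => s.eval z * cauchyTransform μ h z - r.eval z) (cobounded 𝕜) (𝓝 0))
    {z : 𝕜} (hz : z ∉ K) :
    cauchyTransform μ (fun t => s.eval t * h t) z =
      s.eval z * cauchyTransform μ h z - r.eval z := by
  obtain ⟨P, hP⟩ := exists_polynomial_cauchyTransform_eval_mul hK hμK hh s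
  have hsh : Integrable (fun t => s.eval t * h t) μ :=
    integrable_continuousOn_mul hK hμK s.continuousOn hh
  have hlim : Tendsto (fun w => (P + r).eval w) (cobounded 𝕜) (𝓝 0) := by
    have hsub := (tendsto_cauchyTransform_cobounded hK.isBounded hμK hsh).sub hsr
    rw [sub_zero] at hsub
    refine hsub.congr' ?_
    filter_upwards [isBounded_def.mp hK.isBounded] with w hw
    rw [hP w hw, eval_add]
    ring
  rw [hP z hz, eq_neg_of_add_eq_zero_left (polynomial_eq_zero_of_tendsto_cobounded hlim), eval_neg,
    sub_eq_add_neg]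

theorem pade_error_integral_representation_general (hK : IsCompact K) (hμK : ∀ᵐ t ∂μ, t ∈ K)
    (hh : Integrable h μ) {p q : 𝕜[X]}
    (herr : Tendsto (fun z => q.eval z * (q.eval z * cauchyTransform μ h z - p.eval z))
      (cobounded 𝕜) (𝓝 0)) {z : 𝕜} (hz : z ∉ K) (hqz : q.eval z ≠ 0) :
    cauchyTransform μ h z - p.eval z / q.eval z =
      1 / q.eval z ^ 2 * cauchyTransform μ (fun t => q.eval t ^ 2 * h t) z := by
  have hlim : Tendsto (fun w => (q ^ 2).eval w * cauchyTransform μ h w - (q * p).eval w)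
      (cobounded 𝕜) (𝓝 0) := by
    refine herr.congr fun w => ?_
    rw [eval_pow, eval_mul]
    ring
  have hrepr := cauchyTransform_eval_mul_of_tendsto hK hμK hh hlim hz
  simp only [eval_pow, eval_mul] at hrepr
  rw [hrepr]
  field_simp

end CauchyTransform

/-- If `(p, q)` satisfies the Padé interpolation bound
`‖q(z)f(z) − p(z)‖ ≤ C·‖z‖^{−(n+1)}` for all large `z`, where `f` is the Cauchy
transform of `h dμ`, then the error of Padé approximation admits the integral
representation `f(z) − p(z)/q(z) = q(z)⁻² ∫ q(t)² h(t)/(t − z) dμ(t)`. -/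
theorem pade_error_integral_representation
    (R₀ : ℝ) (hR₀ : 0 < R₀) (μ : Measure ℂ) [IsFiniteMeasure μ]
    (hμsupp : μ (Metric.closedBall 0 R₀)ᶜ = 0)
    (h : ℂ → ℂ) (hmeas : Measurable h) (M : ℝ) (hbdd : ∀ t : ℂ, ‖h t‖ ≤ M)
    (f : ℂ → ℂ) (hf : ∀ z : ℂ, f z = ∫ t, h t / (t - z) ∂μ)
    (n : ℕ) (p q : Polynomial ℂ) (hq : q.degree ≤ (n : ℕ))
    (C R : ℝ) (hC : 0 < C) (hR : R₀ ≤ R)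
    (herr : ∀ z : ℂ, R ≤ ‖z‖ → ‖q.eval z * f z - p.eval z‖ ≤ C / ‖z‖ ^ (n + 1)) :
    ∀ z : ℂ, R₀ < ‖z‖ → q.eval z ≠ 0 →
      f z - p.eval z / q.eval z
        = (1 / (q.eval z) ^ 2) * ∫ t, (q.eval t) ^ 2 * h t / (t - z) ∂μ := by
  obtain rfl : f = cauchyTransform μ h := funext hf
  have hh : Integrable h μ := .of_bound hmeas.aestronglyMeasurable M (ae_of_all μ hbdd)
  exact fun z hz hqz => pade_error_integral_representation_general (isCompact_closedBall 0 R₀)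
    hμsupp hh (tendsto_eval_mul_cobounded_zero hq (isBigO_inv_pow_cobounded_of_norm_le herr))
    (by simpa using hz) hqz
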